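/- Let (𝔤,[-,-]₁,[-,-]₂) be a compatible Lie algebra over ℂ. Then there exist bilinear operations ∘ and ∗ on 𝔤 making (𝔤,∘,∗) a compatible anti-pre-Lie algebra with x∘y−y∘x = [x,y]₁ and x∗y−y∗x = [x,y]₂ for all x,y ∈ 𝔤, if and only if there exist a representation (ρ,μ,V) of (𝔤,[-,-]₁,[-,-]₂) and an invertible anti-O-operator T : V → 𝔤 associated to (ρ,μ,V). -/

import Mathlib

universe u

/-- An anti-pre-Lie algebra structure. -/
def IsAntiPreLie {A : Type*} [AddCommGroup A] [Module ℂ A]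
    (m : A →ₗ[ℂ] A →ₗ[ℂ] A) : Prop :=
  (∀ x y z : A, m x (m y z) - m y (m x z) = m (m y x - m x y) z) ∧
  (∀ x y z : A, m (m x y - m y x) z + m (m y z - m z y) x + m (m z x - m x z) y = 0)

/-- A bilinear operation is a Lie bracket. -/
def IsLieBr {g : Type*} [AddCommGroup g] [Module ℂ g]
    (b : g →ₗ[ℂ] g →ₗ[ℂ] g) : Prop :=
  (∀ x y : g, b x y = -b y x) ∧
  (∀ x y z : g, b (b x y) z + b (b y z) x + b (b z x) y = 0)

/-- `r` is a representation of the Lie bracket `b` on `V`. -/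
def IsRep {g V : Type*} [AddCommGroup g] [Module ℂ g] [AddCommGroup V] [Module ℂ V]
    (b : g →ₗ[ℂ] g →ₗ[ℂ] g) (r : g →ₗ[ℂ] V →ₗ[ℂ] V) : Prop :=
  ∀ x y : g, r (b x y) = r x ∘ₗ r y - r y ∘ₗ r x

/-- `T` is an anti-O-operator of `(g, b)` associated to `r`. -/
def IsAntiO {g V : Type*} [AddCommGroup g] [Module ℂ g] [AddCommGroup V] [Module ℂ V]
    (b : g →ₗ[ℂ] g →ₗ[ℂ] g) (r : g →ₗ[ℂ] V →ₗ[ℂ] V) (T : V →ₗ[ℂ] g) : Prop :=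
  ∀ u v : V, b (T u) (T v) = T (r (T v) u - r (T u) v)

lemma antiPreLie_aux {g : Type*} [AddCommGroup g] [Module ℂ g]
    (b m : g →ₗ[ℂ] g →ₗ[ℂ] g) (hb : IsLieBr b)
    (hc : ∀ x y, m x y - m y x = b x y)
    (h1 : ∀ x y z, m (b x y) z = m y (m x z) - m x (m y z)) : IsAntiPreLie m := by
  refine ⟨fun x y z => ?_, fun x y z => ?_⟩
  · rw [hc, h1]
  · rw [hc, hc, hc]
    have hJ := hb.2 x y z
    have e1 := hc (b x y) z
    have e2 := hc (b y z) x
    have e3 := hc (b z x) y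
    have f1 : m z (b x y) = m z (m x y) - m z (m y x) := by rw [← hc, map_sub]
    have f2 : m x (b y z) = m x (m y z) - m x (m z y) := by rw [← hc, map_sub]
    have f3 : m y (b z x) = m y (m z x) - m y (m x z) := by rw [← hc, map_sub]
    have g1 := h1 x y z
    have g2 := h1 y z x
    have g3 := h1 z x y
    have key : (2 : ℂ) • (m (b x y) z + m (b y z) x + m (b z x) y) = 0 := by
      have hs : m (b x y) z + m (b y z) x + m (b z x) y
          = -(m z (b x y) + m x (b y z) + m y (b z x)) := by
        rw [f1, f2, f3, g1, g2, g3]; abel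
      have ht : m (b x y) z + m (b y z) x + m (b z x) y
          - (m z (b x y) + m x (b y z) + m y (b z x)) = 0 := by
        rw [← hJ, ← e1, ← e2, ← e3]; abel
      rw [two_smul]
      nth_rewrite 2 [hs]
      rw [← sub_eq_add_neg]; exact ht
    exact (smul_eq_zero.mp key).resolve_left two_ne_zero

/-- A compatible Lie algebra `(g,b₁,b₂)` admits a compatible
anti-pre-Lie algebra structure whose commutators are the given brackets iff there
exist a representation `(ρ,μ,V)` of `(g,b₁,b₂)` and an invertible anti-O-operator
`T : V → g` associated to it. -/
theorem compatible_antiPreLie_exists_iff_invertible_antiO {g : Type u}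
    [AddCommGroup g] [Module ℂ g]
    (b₁ b₂ : g →ₗ[ℂ] g →ₗ[ℂ] g)
    (hcompat : ∀ k₁ k₂ : ℂ, IsLieBr (k₁ • b₁ + k₂ • b₂)) :
    (∃ c s : g →ₗ[ℂ] g →ₗ[ℂ] g,
      (∀ k₁ k₂ : ℂ, IsAntiPreLie (k₁ • c + k₂ • s)) ∧
      (∀ x y : g, c x y - c y x = b₁ x y) ∧
      (∀ x y : g, s x y - s y x = b₂ x y)) ↔
    (∃ (V : Type u) (_ : AddCommGroup V) (_ : Module ℂ V)
        (ρ μ : g →ₗ[ℂ] V →ₗ[ℂ] V) (T : V →ₗ[ℂ] g),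
      (∀ k₁ k₂ : ℂ, IsRep (k₁ • b₁ + k₂ • b₂) (k₁ • ρ + k₂ • μ)) ∧
      (∀ k₁ k₂ : ℂ, IsAntiO (k₁ • b₁ + k₂ • b₂) (k₁ • ρ + k₂ • μ) T) ∧
      Function.Bijective T) := by
  constructor
  · rintro ⟨c, s, h, hc, hs⟩
    refine ⟨g, inferInstance, inferInstance, -c, -s, LinearMap.id, fun k₁ k₂ x y => ?_,
      fun k₁ k₂ u v => ?_, Function.bijective_id⟩
    · have hm : ∀ x y, (k₁ • b₁ + k₂ • b₂) x y
          = (k₁ • c + k₂ • s) x y - (k₁ • c + k₂ • s) y x := by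
        intro x y
        simp only [LinearMap.add_apply, LinearMap.smul_apply, ← hc, ← hs]
        module
      have hn : k₁ • (-c) + k₂ • (-s) = -(k₁ • c + k₂ • s) := by module
      ext z
      have := (h k₁ k₂).1 y x z
      rw [hn, hm]
      simp only [LinearMap.neg_apply, LinearMap.sub_apply, LinearMap.comp_apply, map_neg, neg_neg]
      rw [← this]; abel
    · simp only [LinearMap.add_apply, LinearMap.smul_apply, ← hc, ← hs, LinearMap.neg_apply,
        LinearMap.id_apply]
      module
  · rintro ⟨V, _, _, ρ, μ, T, hr, hT, hbij⟩
    let e : V ≃ₗ[ℂ] g := LinearEquiv.ofBijective T hbij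
    have he : ∀ v, T v = e v := fun v => rfl
    let φ : (V →ₗ[ℂ] V) →ₗ[ℂ] (g →ₗ[ℂ] g) := (e.conj : _ →ₗ[ℂ] _)
    have hφ : ∀ f x, φ f x = e (f (e.symm x)) := fun f x => rfl
    have hcm : ∀ k₁ k₂ : ℂ, ∀ x y, (k₁ • (-(φ ∘ₗ ρ)) + k₂ • (-(φ ∘ₗ μ))) x y
        = - e ((k₁ • ρ + k₂ • μ) x (e.symm y)) := by
      intro k₁ k₂ x y
      simp only [LinearMap.add_apply, LinearMap.smul_apply, LinearMap.neg_apply,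
        LinearMap.comp_apply, hφ, map_add, map_smul]
      module
    have hcomm : ∀ k₁ k₂ : ℂ, ∀ x y, (k₁ • (-(φ ∘ₗ ρ)) + k₂ • (-(φ ∘ₗ μ))) x y
        - (k₁ • (-(φ ∘ₗ ρ)) + k₂ • (-(φ ∘ₗ μ))) y x = (k₁ • b₁ + k₂ • b₂) x y := by
      intro k₁ k₂ x y
      have := hT k₁ k₂ (e.symm x) (e.symm y)
      simp only [he, LinearEquiv.apply_symm_apply] at this
      rw [this, hcm, hcm, map_sub]
      abel
    refine ⟨-(φ ∘ₗ ρ), -(φ ∘ₗ μ), fun k₁ k₂ => ?_, fun x y => ?_, fun x y => ?_⟩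
    · refine antiPreLie_aux _ _ (hcompat k₁ k₂) (hcomm k₁ k₂) fun x y z => ?_
      simp only [hcm]
      rw [hr k₁ k₂ x y]
      simp only [LinearMap.sub_apply, LinearMap.comp_apply, map_sub, map_neg,
        LinearEquiv.symm_apply_apply]
      abel
    · simpa using hcomm 1 0 x y
    · simpa using hcomm 0 1 x y
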